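/- arXiv:2110.11700 — 3 statements merged into one kernel-verified Lean document; each statement's English description precedes it below -/
import Mathlib

section
/- One step of Plotkin's decomposition rule preserves the pair of instance terms: let t : L.Term ℕ, let σ₁, σ₂ : ℕ → L.Term β, let z : ℕ, n : ℕ, f : L.Functions n, and u, v : Fin n → L.Term β with σ₁ z = Term.func f u and σ₂ z = Term.func f v; let ζ : Fin n → ℕ be injective with ζ i ∉ t.varFinset for all i; let t' := t.subst (fun x => if x = z then Term.func f (fun i => Term.var (ζ i)) else Term.var x), and let σ₁', σ₂' : ℕ → L.Term β satisfy σ₁' (ζ i) = u i and σ₂' (ζ i) = v i for all i, and σ₁' x = σ₁ x and σ₂' x = σ₂ x for all x ∈ t.varFinset with x ≠ z. Then t'.subst σ₁' = t.subst σ₁ and t'.subst σ₂' = t.subst σ₂. -/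
open FirstOrder FirstOrder.Language

/-!
Replacing `z` by `s` and then substituting `σ'` amounts to a single substitution: the one that
agrees with `σ'` except that it takes the value `s.subst σ'` at `z`. For `s = f(z₁, …, zₙ)` this
value is `f(u₁, …, uₙ)`, which is `σ₁ z`, or `f(v₁, …, vₙ)`, which is `σ₂ z`. Away from `z`, the old
and the new substitutions agree on the variables of `t`, and no other variable affects the instance.
-/

section Substitution

variable {L : FirstOrder.Language} {α β γ : Type*}

theorem term_subst_subst (t : L.Term α) (σ : α → L.Term β) (τ : β → L.Term γ) :
    (t.subst σ).subst τ = t.subst fun x => (σ x).subst τ := by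
  induction t with
  | var => rfl
  | func _ _ ih => simp [ih]

theorem func_var_subst {n : ℕ} (f : L.Functions n) {ζ : Fin n → α} {u : Fin n → L.Term β}
    {σ : α → L.Term β} (h : ∀ i, σ (ζ i) = u i) :
    (Term.func f fun i => Term.var (ζ i)).subst σ = Term.func f u :=
  congrArg (Term.func f) (funext h)

variable [DecidableEq α]

theorem term_subst_congr {t : L.Term α} {σ τ : α → L.Term β}
    (h : ∀ x ∈ t.varFinset, σ x = τ x) : t.subst σ = t.subst τ := by
  induction t with
  | var x => exact h x (Finset.mem_singleton_self x)
  | func f ts ih =>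
    refine congrArg (Term.func f) (funext fun i => ih i fun x hx => h x ?_)
    exact Finset.mem_biUnion.mpr ⟨i, Finset.mem_univ i, hx⟩

/-- The term `t[s/z]` obtained from `t` by replacing the variable `z` with the term `s`, as in the
decomposition rule. Since `s` is over the same variables as `t`, it may itself contain `z`. -/
def replaceVar (z : α) (s t : L.Term α) : L.Term α :=
  t.subst fun x => if x = z then s else Term.var x

theorem replaceVar_subst (z : α) (s t : L.Term α) (σ : α → L.Term β) :
    (replaceVar z s t).subst σ = t.subst (Function.update σ z (s.subst σ)) := by
  rw [replaceVar, term_subst_subst]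
  congr 1
  funext x
  by_cases hx : x = z <;> simp [hx]

theorem replaceVar_subst_eq_of_forall_ne {z : α} {s t : L.Term α} {σ σ' : α → L.Term β}
    (hz : s.subst σ' = σ z) (h : ∀ x ∈ t.varFinset, x ≠ z → σ' x = σ x) :
    (replaceVar z s t).subst σ' = t.subst σ := by
  rw [replaceVar_subst, hz]
  refine term_subst_congr fun x hx => ?_
  obtain rfl | hxz := eq_or_ne x z
  · exact Function.update_self ..
  · rw [Function.update_of_ne hxz, h x hx hxz]

theorem plotkin_step_preserves_instances_general (t : L.Term α) (σ₁ σ₂ : α → L.Term β) (z : α)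
    {n : ℕ} (f : L.Functions n) (u v : Fin n → L.Term β)
    (hσ₁ : σ₁ z = Term.func f u) (hσ₂ : σ₂ z = Term.func f v) (ζ : Fin n → α)
    (σ₁' σ₂' : α → L.Term β)
    (hσ₁'ζ : ∀ i, σ₁' (ζ i) = u i) (hσ₂'ζ : ∀ i, σ₂' (ζ i) = v i)
    (hσ₁' : ∀ x ∈ t.varFinset, x ≠ z → σ₁' x = σ₁ x)
    (hσ₂' : ∀ x ∈ t.varFinset, x ≠ z → σ₂' x = σ₂ x) :
    (replaceVar z (Term.func f fun i => Term.var (ζ i)) t).subst σ₁' = t.subst σ₁ ∧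
      (replaceVar z (Term.func f fun i => Term.var (ζ i)) t).subst σ₂' = t.subst σ₂ :=
  ⟨replaceVar_subst_eq_of_forall_ne ((func_var_subst f hσ₁'ζ).trans hσ₁.symm) hσ₁',
    replaceVar_subst_eq_of_forall_ne ((func_var_subst f hσ₂'ζ).trans hσ₂.symm) hσ₂'⟩

end Substitution

/-- One step of Plotkin's decomposition rule preserves the pair of instance terms. -/
theorem plotkin_step_preserves_instances (L : FirstOrder.Language) {β : Type*}
    (t : L.Term ℕ) (σ₁ σ₂ : ℕ → L.Term β) (z : ℕ) (n : ℕ) (f : L.Functions n)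
    (u v : Fin n → L.Term β)
    (hσ₁ : σ₁ z = Term.func f u) (hσ₂ : σ₂ z = Term.func f v)
    (ζ : Fin n → ℕ) (hζinj : Function.Injective ζ)
    (hζfresh : ∀ i, ζ i ∉ t.varFinset)
    (t' : L.Term ℕ)
    (ht' : t' = t.subst
      (fun x => if x = z then Term.func f (fun i => Term.var (ζ i)) else Term.var x))
    (σ₁' σ₂' : ℕ → L.Term β)
    (hσ₁'ζ : ∀ i, σ₁' (ζ i) = u i) (hσ₂'ζ : ∀ i, σ₂' (ζ i) = v i)
    (hσ₁' : ∀ x ∈ t.varFinset, x ≠ z → σ₁' x = σ₁ x)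
    (hσ₂' : ∀ x ∈ t.varFinset, x ≠ z → σ₂' x = σ₂ x) :
    t'.subst σ₁' = t.subst σ₁ ∧ t'.subst σ₂' = t.subst σ₂ := by
  subst ht'
  exact plotkin_step_preserves_instances_general t σ₁ σ₂ z f u v hσ₁ hσ₂ ζ σ₁' σ₂' hσ₁'ζ hσ₂'ζ
    hσ₁' hσ₂'
end

section
/- The denotation of the matching-logic encoding of an antiunification problem is exactly the two-element set of denotations of its instance terms: for every L-structure M, valuation v : β → M, term t : L.Term ℕ, and substitutions σ₁, σ₂ : ℕ → L.Term β, the set S(t,σ₁,σ₂) := {m : M | ∃ w : ℕ → M, ((∀ x ∈ t.varFinset, w x = (σ₁ x).realize v) ∨ (∀ x ∈ t.varFinset, w x = (σ₂ x).realize v)) ∧ t.realize w = m} equals the pair set {(t.subst σ₁).realize v, (t.subst σ₂).realize v}. -/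
open FirstOrder FirstOrder.Language

/-!
Each disjunct of the encoding pins the witness `w` down on the variables of `t` only, but those
values already determine the value of `t`. Hence each disjunct contributes a single element, which
the substitution lemma identifies as the denotation of the corresponding instance of `t`.
-/

section

variable {L : FirstOrder.Language} {α β M : Type*} [L.Structure M] [DecidableEq α]

-- Both sides are the value of the term obtained by restricting `t` to its own variables.
theorem realize_congr_of_eq_on_varFinset {t : L.Term α} {w u : α → M}
    (h : ∀ x ∈ t.varFinset, w x = u x) : t.realize w = t.realize u :=
  (Term.realize_restrictVar (f := Subtype.val) (v := w) w fun _ => rfl).symm.trans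
    (Term.realize_restrictVar u fun x => h x x.2)

theorem exists_eq_on_varFinset_and_realize_eq_iff {t : L.Term α} {u : α → M} {m : M} :
    (∃ w : α → M, (∀ x ∈ t.varFinset, w x = u x) ∧ t.realize w = m) ↔ t.realize u = m := by
  constructor
  · rintro ⟨w, hw, rfl⟩
    exact (realize_congr_of_eq_on_varFinset hw).symm
  · exact fun hm => ⟨u, fun _ _ => rfl, hm⟩

theorem exists_eq_realize_on_varFinset_and_realize_eq_iff {t : L.Term α} {σ : α → L.Term β}
    {v : β → M} {m : M} :
    (∃ w : α → M, (∀ x ∈ t.varFinset, w x = (σ x).realize v) ∧ t.realize w = m) ↔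
      m = (t.subst σ).realize v := by
  rw [exists_eq_on_varFinset_and_realize_eq_iff, Term.realize_subst, eq_comm]

theorem encoding_denotation_general (v : β → M) (t : L.Term α) (σ₁ σ₂ : α → L.Term β) :
    {m : M | ∃ w : α → M,
        ((∀ x ∈ t.varFinset, w x = (σ₁ x).realize v) ∨
          (∀ x ∈ t.varFinset, w x = (σ₂ x).realize v)) ∧
        t.realize w = m} =
      {(t.subst σ₁).realize v, (t.subst σ₂).realize v} := by
  ext m
  simp only [Set.mem_ofPred_eq, or_and_right, exists_or,
    exists_eq_realize_on_varFinset_and_realize_eq_iff, Set.mem_insert_iff, Set.mem_singleton_iff]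

end

/-- The denotation of the matching-logic encoding of an antiunification problem is exactly
the two-element set of denotations of its instance terms. -/
theorem encoding_denotation (L : FirstOrder.Language) {β : Type*} {M : Type*} [L.Structure M]
    (v : β → M) (t : L.Term ℕ) (σ₁ σ₂ : ℕ → L.Term β) :
    {m : M | ∃ w : ℕ → M,
        ((∀ x ∈ t.varFinset, w x = (σ₁ x).realize v) ∨
          (∀ x ∈ t.varFinset, w x = (σ₂ x).realize v)) ∧
        t.realize w = m} =
      {(t.subst σ₁).realize v, (t.subst σ₂).realize v} :=
  encoding_denotation_general v t σ₁ σ₂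
end

section
/- (Theorem 2 of the paper, Soundness, syntactic multi-step form.) Define an antiunification problem over L as a pair ⟨t, P⟩ with t : L.Term ℕ and P a finite list of triples (z, u, v) with pairwise distinct first components, where z : ℕ and u, v : L.Term β; P determines substitutions σ₁(P), σ₂(P) : ℕ → L.Term β sending each such z to u, respectively v. Define the step relation ⇝ by Plotkin's rule: if (z, Term.func f u⃗, Term.func f v⃗) ∈ P for an n-ary f, then ⟨t, P⟩ ⇝ ⟨t.subst (fun x => if x = z then Term.func f (fun i => Term.var (ζ i)) else Term.var x), P'⟩, where ζ : Fin n → ℕ is an injective tuple of variables not occurring in t or as first components of P, and P' is P with the triple (z, Term.func f u⃗, Term.func f v⃗) replaced by the triples (ζ i, u⃗ i, v⃗ i). Then: if ⟨Term.var z₀, [(z₀, t₁, t₂)]⟩ ⇝* ⟨t, P⟩ (reflexive-transitive closure), then t.subst (σ₁(P)) = t₁ and t.subst (σ₂(P)) = t₂; in particular the final generalization t is an antiunifier of t₁ and t₂. -/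
open FirstOrder FirstOrder.Language

/-- An antiunification problem over `L` (with instance terms over variables `β`) is a pair
`⟨t, P⟩` of a term `t : L.Term ℕ` and a finite list `P` of triples `(z, u, v)`. -/
abbrev AntiunifProblem (L : FirstOrder.Language) (β : Type*) :=
  L.Term ℕ × List (ℕ × L.Term β × L.Term β)

/-- The step relation `⇝` of Plotkin's antiunification algorithm: a triple
`(z, f(u⃗), f(v⃗))` of `P` is replaced by the triples `(ζ i, u⃗ i, v⃗ i)` for fresh,
pairwise distinct variables `ζ i`, and `z` is substituted by `f(ζ 0, …, ζ (n-1))` in `t`.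
The first components of `P` are required to be pairwise distinct. -/
inductive PlotkinStep (L : FirstOrder.Language) (β : Type*) :
    AntiunifProblem L β → AntiunifProblem L β → Prop
  | step (t : L.Term ℕ) (P : List (ℕ × L.Term β × L.Term β))
      (z : ℕ) (n : ℕ) (f : L.Functions n) (u v : Fin n → L.Term β) (ζ : Fin n → ℕ)
      (hnodup : (P.map Prod.fst).Nodup)
      (hmem : (z, Term.func f u, Term.func f v) ∈ P)
      (hζinj : Function.Injective ζ)
      (hζfresh : ∀ i, ζ i ∉ t.varFinset ∧ ∀ p ∈ P, ζ i ≠ p.1) :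
      PlotkinStep L β (t, P)
        (t.subst
            (fun x => if x = z then Term.func f (fun i => Term.var (ζ i)) else Term.var x),
          (List.ofFn fun i => (ζ i, u i, v i)) ++ P.filter (fun p => p.1 ≠ z))

/-!
Consider all pairs `(t.subst σ₁, t.subst σ₂)` with `σ₁`, `σ₂` compatible with `P`. A Plotkin step
does not change this set: a compatible pair for the new problem is pulled back by giving `z` the
values `f(u⃗)`, `f(v⃗)`, and a compatible pair for the old one is pushed forward by giving the fresh
`ζ i` the values `u⃗ i`, `v⃗ i`. For the initial problem the set is `{(t₁, t₂)}`.
-/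

section Substitution

variable {L : FirstOrder.Language} {α β γ : Type*}

theorem subst_subst (t : L.Term α) (θ : α → L.Term β) (σ : β → L.Term γ) :
    (t.subst θ).subst σ = t.subst fun x => (θ x).subst σ := by
  induction t with
  | var x => rfl
  | func f ts ih => simp only [Term.subst, ih]

theorem subst_congr [DecidableEq α] {t : L.Term α} {σ τ : α → L.Term β}
    (h : ∀ x ∈ t.varFinset, σ x = τ x) : t.subst σ = t.subst τ := by
  induction t with
  | var x => exact h x (Finset.mem_singleton_self x)
  | func f ts ih =>
    simp only [Term.subst, Term.func.injEq, heq_eq_eq, true_and]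
    exact funext fun i => ih i fun x hx =>
      h x (Finset.mem_biUnion.2 ⟨i, Finset.mem_univ i, hx⟩)

theorem subst_ite_func_subst [DecidableEq α] {n : ℕ} (t : L.Term α) (z : α) (f : L.Functions n)
    (ζ : Fin n → α) (σ : α → L.Term β) :
    (t.subst fun x => if x = z then Term.func f fun i => Term.var (ζ i) else Term.var x).subst σ =
      t.subst (Function.update σ z (Term.func f (σ ∘ ζ))) := by
  rw [subst_subst]
  congr 1 with x
  by_cases hx : x = z
  · subst hx
    simp only [if_true, Function.update_self]
    rfl
  · simp only [if_neg hx, Function.update_of_ne hx]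
    rfl

end Substitution

section AssociationList

variable {α γ ι : Type*}

/-- `σ` sends every key of the association list `P` to the value listed with it. With values in
`L.Term β × L.Term β`, this says that the two components of `σ` are the substitutions `σ₁`, `σ₂`
determined by `P`; they are left arbitrary away from the keys. -/
def Extends (σ : α → γ) (P : List (α × γ)) : Prop :=
  ∀ p ∈ P, σ p.1 = p.2

theorem extends_append {σ : α → γ} {P Q : List (α × γ)} :
    Extends σ (P ++ Q) ↔ Extends σ P ∧ Extends σ Q :=
  List.forall_mem_append

theorem extends_ofFn {n : ℕ} {σ : α → γ} {ζ : Fin n → α} {w : Fin n → γ} :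
    Extends σ (List.ofFn fun i => (ζ i, w i)) ↔ ∀ i, σ (ζ i) = w i :=
  List.forall_mem_ofFn_iff

theorem Extends.filter {σ : α → γ} {P : List (α × γ)} (h : Extends σ P) (b : α × γ → Bool) :
    Extends σ (P.filter b) :=
  fun p hp => h p (List.mem_of_mem_filter hp)

theorem Extends.update [DecidableEq α] {σ : α → γ} {P : List (α × γ)} {z : α} {c : γ}
    (hnodup : (P.map Prod.fst).Nodup) (hmem : (z, c) ∈ P)
    (h : Extends σ (P.filter fun p => p.1 ≠ z)) : Extends (Function.update σ z c) P := by
  intro p hp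
  by_cases hz : p.1 = z
  · have hpc : p = (z, c) := List.inj_on_of_nodup_map hnodup hp hmem hz
    rw [hpc, Function.update_self]
  · rw [Function.update_of_ne hz]
    exact h p (List.mem_filter.2 ⟨hp, decide_eq_true hz⟩)

theorem Extends.extend {σ : α → γ} {P : List (α × γ)} (h : Extends σ P) {ζ : ι → α}
    (hfresh : ∀ i, ∀ p ∈ P, ζ i ≠ p.1) (w : ι → γ) : Extends (Function.extend ζ w σ) P := by
  intro p hp
  rw [Function.extend_apply' _ _ _ fun ⟨i, hi⟩ => hfresh i p hp hi]
  exact h p hp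

end AssociationList

section Instances

variable {L : FirstOrder.Language} {α β : Type*}

/-- The pair `(t.subst σ₁, t.subst σ₂)`, where the substitutions `σ₁`, `σ₂` are encoded as the two
components of a single function `σ`. -/
def instancePair (σ : α → L.Term β × L.Term β) (t : L.Term α) : L.Term β × L.Term β :=
  (t.subst (Prod.fst ∘ σ), t.subst (Prod.snd ∘ σ))

theorem instancePair_congr [DecidableEq α] {σ τ : α → L.Term β × L.Term β} {t : L.Term α}
    (h : ∀ x ∈ t.varFinset, σ x = τ x) : instancePair σ t = instancePair τ t :=
  Prod.ext (subst_congr fun x hx => congrArg Prod.fst (h x hx))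
    (subst_congr fun x hx => congrArg Prod.snd (h x hx))

theorem instancePair_subst_ite_func [DecidableEq α] {n : ℕ} {σ : α → L.Term β × L.Term β}
    {ζ : Fin n → α} {u v : Fin n → L.Term β} (hσ : ∀ i, σ (ζ i) = (u i, v i))
    (t : L.Term α) (z : α) (f : L.Functions n) :
    instancePair σ
        (t.subst fun x => if x = z then Term.func f fun i => Term.var (ζ i) else Term.var x) =
      instancePair (Function.update σ z (Term.func f u, Term.func f v)) t := by
  have hu : (Prod.fst ∘ σ) ∘ ζ = u := funext fun i => congrArg Prod.fst (hσ i)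
  have hv : (Prod.snd ∘ σ) ∘ ζ = v := funext fun i => congrArg Prod.snd (hσ i)
  simp only [instancePair, subst_ite_func_subst, hu, hv, Function.comp_update]

/-- The pairs of terms that the problem `⟨t, P⟩` generalizes: all `(t.subst σ₁, t.subst σ₂)` with
`σ₁`, `σ₂` determined by `P`. This set is the invariant of Plotkin's algorithm. -/
def instancePairs (p : AntiunifProblem L β) : Set (L.Term β × L.Term β) :=
  {c | ∃ σ, Extends σ p.2 ∧ instancePair σ p.1 = c}

theorem instancePairs_var_singleton (z₀ : ℕ) (t₁ t₂ : L.Term β) :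
    instancePairs (Term.var z₀, [(z₀, t₁, t₂)]) = {(t₁, t₂)} := by
  ext c
  constructor
  · rintro ⟨σ, hσ, rfl⟩
    exact hσ (z₀, t₁, t₂) (List.mem_singleton_self _)
  · rintro rfl
    exact ⟨fun _ => (t₁, t₂), fun p hp => by rw [List.mem_singleton.1 hp], rfl⟩

theorem PlotkinStep.instancePairs_subset {p q : AntiunifProblem L β} (h : PlotkinStep L β p q) :
    instancePairs q ⊆ instancePairs p := by
  obtain ⟨t, P, z, n, f, u, v, ζ, hnodup, hmem, -, -⟩ := h
  rintro _ ⟨σ, hσ, rfl⟩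
  obtain ⟨hσζ, hσP⟩ := extends_append.1 hσ
  exact ⟨_, hσP.update hnodup hmem,
    (instancePair_subst_ite_func (extends_ofFn.1 hσζ) t z f).symm⟩

theorem PlotkinStep.subset_instancePairs {p q : AntiunifProblem L β} (h : PlotkinStep L β p q) :
    instancePairs p ⊆ instancePairs q := by
  obtain ⟨t, P, z, n, f, u, v, ζ, -, hmem, hinj, hfresh⟩ := h
  rintro _ ⟨σ, hσ, rfl⟩
  let τ : ℕ → L.Term β × L.Term β := Function.extend ζ (fun i => (u i, v i)) σ
  have hτζ : ∀ i, τ (ζ i) = (u i, v i) := hinj.extend_apply _ _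
  have hτP : Extends τ P := hσ.extend (fun i => (hfresh i).2) _
  refine ⟨τ, extends_append.2 ⟨extends_ofFn.2 hτζ, hτP.filter _⟩, ?_⟩
  have hτz : τ z = (Term.func f u, Term.func f v) := hτP _ hmem
  rw [instancePair_subst_ite_func hτζ, ← hτz, Function.update_eq_self]
  exact instancePair_congr fun x hx =>
    Function.extend_apply' _ _ _ fun ⟨i, hi⟩ => (hfresh i).1 (hi ▸ hx)

theorem instancePairs_eq_of_reflTransGen {p q : AntiunifProblem L β}
    (h : Relation.ReflTransGen (PlotkinStep L β) p q) : instancePairs p = instancePairs q := by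
  induction h with
  | refl => rfl
  | tail _ hstep ih =>
    exact ih.trans (hstep.subset_instancePairs.antisymm hstep.instancePairs_subset)

end Instances

theorem plotkin_soundness_general (L : FirstOrder.Language) {β : Type*}
    (z₀ : ℕ) (t₁ t₂ : L.Term β) (t : L.Term ℕ) (P : List (ℕ × L.Term β × L.Term β))
    (h : Relation.ReflTransGen (PlotkinStep L β) (Term.var z₀, [(z₀, t₁, t₂)]) (t, P)) :
    (∀ σ₁ σ₂ : ℕ → L.Term β, (∀ p ∈ P, σ₁ p.1 = p.2.1) → (∀ p ∈ P, σ₂ p.1 = p.2.2) →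
        t.subst σ₁ = t₁ ∧ t.subst σ₂ = t₂) ∧
      ∃ σ₁ σ₂ : ℕ → L.Term β, t.subst σ₁ = t₁ ∧ t.subst σ₂ = t₂ := by
  have hpairs : instancePairs (t, P) = {(t₁, t₂)} :=
    (instancePairs_eq_of_reflTransGen h).symm.trans (instancePairs_var_singleton z₀ t₁ t₂)
  constructor
  · intro σ₁ σ₂ hσ₁ hσ₂
    have hσ : (t.subst σ₁, t.subst σ₂) ∈ instancePairs (t, P) :=
      ⟨fun x => (σ₁ x, σ₂ x), fun p hp => Prod.ext (hσ₁ p hp) (hσ₂ p hp), rfl⟩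
    rw [hpairs] at hσ
    exact Prod.mk.inj hσ
  · obtain ⟨σ, -, hσ⟩ : (t₁, t₂) ∈ instancePairs (t, P) := hpairs ▸ Set.mem_singleton _
    exact ⟨_, _, Prod.mk.inj hσ⟩

/-- Theorem 2 (Soundness, syntactic multi-step form): if Plotkin's algorithm, started on
`⟨z₀, {z₀ ↦ t₁ ⊔ t₂}⟩`, reaches `⟨t, P⟩`, then for the substitutions `σ₁, σ₂` determined
by `P` (sending each first component to the corresponding left, resp. right, component)
we have `t.subst σ₁ = t₁` and `t.subst σ₂ = t₂`; in particular `t` is an antiunifier of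
`t₁` and `t₂`. -/
theorem plotkin_soundness (L : FirstOrder.Language) {β : Type*}
    (z₀ : ℕ) (t₁ t₂ : L.Term β) (t : L.Term ℕ) (P : List (ℕ × L.Term β × L.Term β))
    (h : Relation.ReflTransGen (PlotkinStep L β) (Term.var z₀, [(z₀, t₁, t₂)]) (t, P))
    (σ₁ σ₂ : ℕ → L.Term β)
    (hσ₁ : ∀ p ∈ P, σ₁ p.1 = p.2.1)
    (hσ₂ : ∀ p ∈ P, σ₂ p.1 = p.2.2) :
    (t.subst σ₁ = t₁ ∧ t.subst σ₂ = t₂) ∧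
      ∃ σ₁' σ₂' : ℕ → L.Term β, t.subst σ₁' = t₁ ∧ t.subst σ₂' = t₂ := by
  have hgeneral := plotkin_soundness_general L z₀ t₁ t₂ t P h
  exact ⟨hgeneral.1 σ₁ σ₂ hσ₁ hσ₂, hgeneral.2⟩
end
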